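/- arXiv:2102.06148 — 3 statements merged into one kernel-verified Lean document; each statement's English description precedes it below -/
import Mathlib

section
/- (The observer-conditional operator is not definable in Coalition Logic) Let Agt contain two distinct agents a, b and let p, q be distinct atomic propositions. Then there is no CL-formula χ such that for every concurrent game model M over Agt and every state s of M: M, s ⊨ χ if and only if M, s ⊨ Oβ({a};∅)(p▷q), where M,s ⊨ Oβ({a};∅)(p▷q) iff every joint action σ_a of {a} at s satisfying M,u ⊨ p for all u ∈ Out[s,σ_a] also satisfies M,u ⊨ q for all u ∈ Out[s,σ_a]. In particular, there exist a concurrent game model and two CL-bisimilar states of it such that Oβ({a};∅)(p▷q) is true at one and false at the other. -/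
/-- A concurrent game model over a set of agents `Agt` and atomic propositions `Prp`.
The local outcome function is represented by a total function `out`; the semantics
only ever uses its values on action profiles that are available at the given state. -/
structure CGM (Agt Prp : Type) where
  State : Type
  state_ne : Nonempty State
  Act : Agt → Type
  act_ne : ∀ a, Nonempty (Act a)
  avail : State → ∀ a, Set (Act a)
  avail_ne : ∀ s a, (avail s a).Nonempty
  out : State → (∀ a, Act a) → State
  val : Prp → Set State

namespace CGM

variable {Agt Prp : Type}

/-- `σ` represents a joint action of coalition `C` available at state `s`
(only the values of `σ` on `C` are relevant). -/
def JointAt (M : CGM Agt Prp) (C : Set Agt) (s : M.State)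
    (σ : ∀ a, M.Act a) : Prop :=
  ∀ a ∈ C, σ a ∈ M.avail s a

/-- `Out[s, σ_C]`: outcomes of available action profiles at `s` extending `σ` on `C`. -/
def Outs (M : CGM Agt Prp) (s : M.State) (C : Set Agt)
    (σ : ∀ a, M.Act a) : Set M.State :=
  { u | ∃ τ : ∀ a, M.Act a, (∀ a, τ a ∈ M.avail s a) ∧
        (∀ a ∈ C, τ a = σ a) ∧ M.out s τ = u }

/-- `Out[s, σ_A ⊎ σ_B]`: outcomes of available action profiles at `s` agreeing
with `σA` on `A` and with `σB` on `B \ A`. -/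
def OutsAB (M : CGM Agt Prp) (s : M.State) (A B : Set Agt)
    (σA σB : ∀ a, M.Act a) : Set M.State :=
  { u | ∃ τ : ∀ a, M.Act a, (∀ a, τ a ∈ M.avail s a) ∧
        (∀ a ∈ A, τ a = σA a) ∧ (∀ a ∈ B \ A, τ a = σB a) ∧ M.out s τ = u }

end CGM

/-- Formulas of the logic ConStR. -/
inductive ConStR (Agt Prp : Type) : Type where
  | atom : Prp → ConStR Agt Prp
  | tru  : ConStR Agt Prp
  | neg  : ConStR Agt Prp → ConStR Agt Prp
  | conj : ConStR Agt Prp → ConStR Agt Prp → ConStR Agt Prp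
  | oc   : Set Agt → Set Agt → ConStR Agt Prp → ConStR Agt Prp → ConStR Agt Prp
  | oa   : Set Agt → Set Agt → ConStR Agt Prp → ConStR Agt Prp → ConStR Agt Prp
  | ob   : Set Agt → Set Agt → ConStR Agt Prp → ConStR Agt Prp → ConStR Agt Prp

namespace CGM

variable {Agt Prp : Type}

/-- Truth of a ConStR-formula at a state of a concurrent game model. -/
def sat (M : CGM Agt Prp) : ConStR Agt Prp → M.State → Prop
  | .atom p, s => s ∈ M.val p
  | .tru, _ => True
  | .neg φ, s => ¬ M.sat φ s
  | .conj φ ψ, s => M.sat φ s ∧ M.sat ψ s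
  | .oc A B φ ψ, s =>
      ∃ σA, M.JointAt A s σA ∧ (∀ u ∈ M.Outs s A σA, M.sat φ u) ∧
        ∃ σB, M.JointAt B s σB ∧ ∀ u ∈ M.OutsAB s A B σA σB, M.sat ψ u
  | .oa A B φ ψ, s =>
      ∃ σB, M.JointAt B s σB ∧ ∀ σA, M.JointAt A s σA →
        (∀ u ∈ M.Outs s A σA, M.sat φ u) →
        ∀ u ∈ M.OutsAB s A B σA σB, M.sat ψ u
  | .ob A B φ ψ, s =>
      ∀ σA, M.JointAt A s σA → (∀ u ∈ M.Outs s A σA, M.sat φ u) →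
        ∃ σB, M.JointAt B s σB ∧ ∀ u ∈ M.OutsAB s A B σA σB, M.sat ψ u

end CGM

/-- Formulas of Coalition Logic CL. -/
inductive CLForm (Agt Prp : Type) : Type where
  | atom : Prp → CLForm Agt Prp
  | tru  : CLForm Agt Prp
  | neg  : CLForm Agt Prp → CLForm Agt Prp
  | conj : CLForm Agt Prp → CLForm Agt Prp → CLForm Agt Prp
  | coal : Set Agt → CLForm Agt Prp → CLForm Agt Prp

namespace CGM

variable {Agt Prp : Type}

/-- Truth of a CL-formula at a state of a concurrent game model. -/
def satCL (M : CGM Agt Prp) : CLForm Agt Prp → M.State → Prop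
  | .atom p, s => s ∈ M.val p
  | .tru, _ => True
  | .neg φ, s => ¬ M.satCL φ s
  | .conj φ ψ, s => M.satCL φ s ∧ M.satCL ψ s
  | .coal C φ, s => ∃ σ, M.JointAt C s σ ∧ ∀ u ∈ M.Outs s C σ, M.satCL φ u

/-- A CL-bisimulation in a concurrent game model. -/
def CLBisim (M : CGM Agt Prp) (R : M.State → M.State → Prop) : Prop :=
  ∀ s1 s2, R s1 s2 →
    (∀ p : Prp, s1 ∈ M.val p ↔ s2 ∈ M.val p) ∧
    ∀ C : Set Agt,
      (∀ σ1, M.JointAt C s1 σ1 → ∃ σ2, M.JointAt C s2 σ2 ∧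
        ∀ u2 ∈ M.Outs s2 C σ2, ∃ u1 ∈ M.Outs s1 C σ1, R u1 u2) ∧
      (∀ σ2, M.JointAt C s2 σ2 → ∃ σ1, M.JointAt C s1 σ1 ∧
        ∀ u1 ∈ M.Outs s1 C σ1, ∃ u2 ∈ M.Outs s2 C σ2, R u2 u1)

end CGM

/-! Coalition Logic only sees which sets of outcomes a coalition can force, up to supersets, while
`Oβ({a};∅)(p▷q)` inspects every single action of `a`. Let `a` pick a row and `b` a column of

    safe    {p, q}  {p, q}
    risky   {p}     ∅

Adding the row `hedge = ({p}, {p, q})` gives `a` nothing new to force, as its outcomes include the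
only outcome of `safe`, and takes nothing from `b`, as each of its entries already occurs in its
column. But `hedge` guarantees `p` without guaranteeing `q`. -/

namespace CGM

section General

variable {Agt Prp : Type} {M : CGM Agt Prp}

theorem CLBisim.satCL_iff {R : M.State → M.State → Prop} (hR : M.CLBisim R)
    (φ : CLForm Agt Prp) {s t : M.State} (hst : R s t) : M.satCL φ s ↔ M.satCL φ t := by
  induction φ generalizing s t with
  | atom r => exact (hR s t hst).1 r
  | tru => exact Iff.rfl
  | neg φ ih => exact not_congr (ih hst)
  | conj φ ψ ihφ ihψ => exact and_congr (ihφ hst) (ihψ hst)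
  | coal C φ ih =>
    obtain ⟨forth, back⟩ := (hR s t hst).2 C
    constructor
    · rintro ⟨σ, hσ, hφ⟩
      obtain ⟨σ', hσ', hout⟩ := forth σ hσ
      refine ⟨σ', hσ', fun v hv => ?_⟩
      obtain ⟨u, hu, huv⟩ := hout v hv
      exact (ih huv).1 (hφ u hu)
    · rintro ⟨σ, hσ, hφ⟩
      obtain ⟨σ', hσ', hout⟩ := back σ hσ
      refine ⟨σ', hσ', fun u hu => ?_⟩
      obtain ⟨v, hv, hvu⟩ := hout u hu
      exact (ih hvu).1 (hφ v hv)

theorem CLBisim.not_definable {P : ∀ M : CGM Agt Prp, M.State → Prop}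
    {R : M.State → M.State → Prop} (hR : M.CLBisim R) {s t : M.State} (hst : R s t)
    (hs : P M s) (ht : ¬ P M t) :
    ¬ ∃ χ : CLForm Agt Prp, ∀ (M : CGM Agt Prp) (s : M.State), M.satCL χ s ↔ P M s :=
  fun ⟨χ, hχ⟩ => ht ((hχ M t).1 ((hR.satCL_iff χ hst).1 ((hχ M s).2 hs)))

theorem clBisim_of_symmetric {R : M.State → M.State → Prop} (hsymm : ∀ s t, R s t → R t s)
    (hval : ∀ s t, R s t → ∀ r, s ∈ M.val r ↔ t ∈ M.val r)
    (hforth : ∀ s t, R s t → ∀ C σ, M.JointAt C s σ → ∃ σ', M.JointAt C t σ' ∧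
      ∀ v ∈ M.Outs t C σ', ∃ u ∈ M.Outs s C σ, R u v) :
    M.CLBisim R := fun s t hst =>
  ⟨hval s t hst, fun C => ⟨hforth s t hst C, hforth t s (hsymm s t hst) C⟩⟩

theorem outsAB_eq_outs_union (s : M.State) (A B : Set Agt) [∀ i, Decidable (i ∈ A)]
    (σA σB : ∀ i, M.Act i) : M.OutsAB s A B σA σB = M.Outs s (A ∪ B) (A.piecewise σA σB) := by
  ext u
  refine exists_congr fun τ => and_congr_right fun _ => ?_
  rw [← and_assoc]
  refine and_congr_left fun _ => ⟨?_, fun h => ⟨fun i hi => ?_, fun i hi => ?_⟩⟩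
  · rintro ⟨hA, hB⟩ i hi
    by_cases hiA : i ∈ A
    · rw [Set.piecewise_eq_of_mem _ _ _ hiA, hA i hiA]
    · rw [Set.piecewise_eq_of_notMem _ _ _ hiA, hB i ⟨hi.resolve_left hiA, hiA⟩]
  · rw [h i (Or.inl hi), Set.piecewise_eq_of_mem _ _ _ hi]
  · rw [h i (Or.inr hi.1), Set.piecewise_eq_of_notMem _ _ _ hi.2]

end General

section OneShot

variable {Agt Prp ι X Y : Type} [Nonempty X] [Nonempty Y]

/-- The model in which, at the initial state `i : ι`, agent `a` picks a row and agent `b` a column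
of the matrix `g i`, leading to an absorbing state that satisfies exactly the atoms in the chosen
entry. Every agent names both a row and a column, so that all action sets agree; only the row of `a`
and the column of `b` count. -/
abbrev oneShot (a b : Agt) (g : ι → X → Y → Set Prp) : CGM Agt Prp where
  State := ι ⊕ Set Prp
  state_ne := ⟨.inr ∅⟩
  Act _ := X × Y
  act_ne _ := inferInstance
  avail _ _ := Set.univ
  avail_ne _ _ := Set.univ_nonempty
  out s τ := s.elim (fun i => .inr (g i (τ a).1 (τ b).2)) .inr
  val r := {s | s.elim (fun _ => False) (r ∈ ·)}

variable {a b : Agt} {g : ι → X → Y → Set Prp}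

theorem jointAt_oneShot (C : Set Agt) (s : (oneShot a b g).State) (σ : Agt → X × Y) :
    (oneShot a b g).JointAt C s σ :=
  fun _ _ => Set.mem_univ _

theorem mem_outs_oneShot_inl {i : ι} {C : Set Agt} {σ : Agt → X × Y}
    {u : (oneShot a b g).State} :
    u ∈ (oneShot a b g).Outs (.inl i) C σ ↔
      ∃ x y, (a ∈ C → x = (σ a).1) ∧ (b ∈ C → y = (σ b).2) ∧ .inr (g i x y) = u := by
  classical
  constructor
  · rintro ⟨τ, -, hτ, rfl⟩
    exact ⟨(τ a).1, (τ b).2, fun ha => congrArg Prod.fst (hτ a ha),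
      fun hb => congrArg Prod.snd (hτ b hb), rfl⟩
  · rintro ⟨x, y, hx, hy, rfl⟩
    let τ : Agt → X × Y := C.piecewise σ fun _ => (x, y)
    have hτa : (τ a).1 = x := by
      by_cases ha : a ∈ C
      · simp only [τ, Set.piecewise_eq_of_mem _ _ _ ha, hx ha]
      · simp only [τ, Set.piecewise_eq_of_notMem _ _ _ ha]
    have hτb : (τ b).2 = y := by
      by_cases hb : b ∈ C
      · simp only [τ, Set.piecewise_eq_of_mem _ _ _ hb, hy hb]
      · simp only [τ, Set.piecewise_eq_of_notMem _ _ _ hb]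
    refine ⟨τ, fun _ => Set.mem_univ _, fun i hi => Set.piecewise_eq_of_mem _ _ _ hi, ?_⟩
    change Sum.inr (g i (τ a).1 (τ b).2) = _
    rw [hτa, hτb]

theorem outs_oneShot_inl_eq_range {i : ι} {C : Set Agt} (ha : a ∈ C) (hb : b ∉ C)
    (σ : Agt → X × Y) :
    (oneShot a b g).Outs (.inl i) C σ = Set.range fun y => .inr (g i (σ a).1 y) := by
  ext u
  rw [mem_outs_oneShot_inl]
  constructor
  · rintro ⟨x, y, hx, -, rfl⟩
    exact ⟨y, by rw [hx ha]⟩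
  · rintro ⟨y, rfl⟩
    exact ⟨(σ a).1, y, fun _ => rfl, fun h => absurd h hb, rfl⟩

theorem exists_outs_oneShot_subset
    (hcol : ∀ i j y, (Set.range fun x => g i x y) ⊆ Set.range fun x => g j x y)
    (hrow : ∀ i j x, ∃ x', Set.range (g j x') ⊆ Set.range (g i x))
    (i j : ι) (C : Set Agt) (σ : Agt → X × Y) :
    ∃ σ' : Agt → X × Y,
      (oneShot a b g).Outs (.inl j) C σ' ⊆ (oneShot a b g).Outs (.inl i) C σ := by
  by_cases ha : a ∈ C
  · by_cases hb : b ∈ C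
    · obtain ⟨x', hx'⟩ := hcol i j (σ b).2 ⟨(σ a).1, rfl⟩
      refine ⟨fun _ => (x', (σ b).2), fun u hu => ?_⟩
      obtain ⟨x, y, hx, hy, rfl⟩ := mem_outs_oneShot_inl.1 hu
      obtain rfl := hx ha
      obtain rfl := hy hb
      exact mem_outs_oneShot_inl.2
        ⟨(σ a).1, (σ b).2, fun _ => rfl, fun _ => rfl, congrArg Sum.inr hx'.symm⟩
    · obtain ⟨x', hx'⟩ := hrow i j (σ a).1
      refine ⟨fun _ => (x', (σ b).2), ?_⟩
      rw [outs_oneShot_inl_eq_range ha hb, outs_oneShot_inl_eq_range ha hb]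
      rintro _ ⟨y, rfl⟩
      obtain ⟨y', hy'⟩ := hx' ⟨y, rfl⟩
      exact ⟨y', congrArg Sum.inr hy'⟩
  · refine ⟨σ, fun u hu => ?_⟩
    obtain ⟨x, y, -, hy, rfl⟩ := mem_outs_oneShot_inl.1 hu
    obtain ⟨x', hx'⟩ := hcol j i y ⟨x, rfl⟩
    exact mem_outs_oneShot_inl.2 ⟨x', y, fun h => absurd h ha, hy, congrArg Sum.inr hx'⟩

theorem clBisim_oneShot
    (hcol : ∀ i j y, (Set.range fun x => g i x y) ⊆ Set.range fun x => g j x y)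
    (hrow : ∀ i j x, ∃ x', Set.range (g j x') ⊆ Set.range (g i x)) :
    (oneShot a b g).CLBisim (Sum.LiftRel (fun _ _ => True) Eq) := by
  have hrefl (s : ι ⊕ Set Prp) : Sum.LiftRel (fun _ _ => True) Eq s s := by
    cases s <;> constructor <;> trivial
  refine clBisim_of_symmetric ?_ ?_ ?_
  · rintro _ _ (_ | rfl)
    · exact .inl trivial
    · exact hrefl _
  · rintro _ _ (_ | rfl) r <;> exact Iff.rfl
  · rintro _ _ (@⟨i, j, -⟩ | rfl) C σ hσ
    · obtain ⟨σ', hσ'⟩ := exists_outs_oneShot_subset (a := a) (b := b) hcol hrow i j C σ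
      exact ⟨σ', jointAt_oneShot C _ σ', fun u hu => ⟨u, hσ' hu, hrefl u⟩⟩
    · exact ⟨σ, hσ, fun u hu => ⟨u, hu, hrefl u⟩⟩

theorem sat_ob_oneShot_inl {A B : Set Agt} (ha : a ∈ A) (hb : b ∉ A ∪ B) (p q : Prp) (i : ι) :
    (oneShot a b g).sat (.ob A B (.atom p) (.atom q)) (.inl i) ↔
      ∀ x, (∀ y, p ∈ g i x y) → ∀ y, q ∈ g i x y := by
  classical
  have outs_A (σ : Agt → X × Y) := outs_oneShot_inl_eq_range (g := g) (i := i) ha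
    (fun h => hb (.inl h)) σ
  have outs_AB (σA σB : Agt → X × Y) : (oneShot a b g).OutsAB (.inl i) A B σA σB =
      Set.range fun y => .inr (g i (σA a).1 y) := by
    rw [outsAB_eq_outs_union, outs_oneShot_inl_eq_range (.inl ha) hb,
      Set.piecewise_eq_of_mem _ _ _ ha]
  constructor
  · intro h x hp
    obtain ⟨y₀⟩ := ‹Nonempty Y›
    obtain ⟨σB, -, hq⟩ := h (fun _ => (x, y₀)) (jointAt_oneShot A _ _) (by
      rw [outs_A]
      exact Set.forall_mem_range.2 hp)
    rw [outs_AB] at hq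
    exact Set.forall_mem_range.1 hq
  · intro h σA _ hp
    rw [outs_A] at hp
    refine ⟨σA, jointAt_oneShot B _ σA, ?_⟩
    rw [outs_AB]
    exact Set.forall_mem_range.2 (h (σA a).1 (Set.forall_mem_range.1 hp))

end OneShot

section Hedge

/-- The rows of the two matrices of `hedgePayoff`. -/
inductive HedgeRow
  | safe
  | risky
  | hedge

instance : Nonempty HedgeRow := ⟨.safe⟩

variable {Prp : Type}

/-- The two matrices that Coalition Logic cannot tell apart, with columns indexed by `Bool`. In the
matrix `false` the row `hedge` is a copy of `safe`, which stands for its absence. -/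
def hedgePayoff (p q : Prp) : Bool → HedgeRow → Bool → Set Prp
  | _, .safe, _ => {p, q}
  | _, .risky, false => {p}
  | _, .risky, true => ∅
  | false, .hedge, _ => {p, q}
  | true, .hedge, false => {p}
  | true, .hedge, true => {p, q}

theorem range_hedgePayoff_col_subset (p q : Prp) (i j y : Bool) :
    (Set.range fun x => hedgePayoff p q i x y) ⊆ Set.range fun x => hedgePayoff p q j x y := by
  rintro _ ⟨x, rfl⟩
  match i, x, y with
  | _, .safe, _ => exact ⟨.safe, rfl⟩
  | _, .risky, false => exact ⟨.risky, rfl⟩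
  | _, .risky, true => exact ⟨.risky, rfl⟩
  | false, .hedge, _ => exact ⟨.safe, rfl⟩
  | true, .hedge, false => exact ⟨.risky, rfl⟩
  | true, .hedge, true => exact ⟨.safe, rfl⟩

theorem exists_range_hedgePayoff_row_subset (p q : Prp) (i j : Bool) (x : HedgeRow) :
    ∃ x', Set.range (hedgePayoff p q j x') ⊆ Set.range (hedgePayoff p q i x) := by
  cases x with
  | safe => exact ⟨.safe, subset_rfl⟩
  | risky => exact ⟨.risky, by rintro _ ⟨_ | _, rfl⟩; exacts [⟨false, rfl⟩, ⟨true, rfl⟩]⟩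
  | hedge => exact ⟨.safe, by rintro _ ⟨_, rfl⟩; exact ⟨true, by cases i <;> rfl⟩⟩

theorem mem_hedgePayoff_false_of_forall_mem {p q : Prp} {x : HedgeRow}
    (hp : ∀ y, p ∈ hedgePayoff p q false x y) (y : Bool) : q ∈ hedgePayoff p q false x y := by
  cases x with
  | safe => exact .inr rfl
  | risky => exact (hp true).elim
  | hedge => exact .inr rfl

theorem mem_hedgePayoff_true_hedge (p q : Prp) (y : Bool) :
    p ∈ hedgePayoff p q true .hedge y := by
  cases y
  exacts [rfl, .inl rfl]

end Hedge

end CGM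

open CGM in
theorem observer_conditional_not_definable_in_CL_general {Agt Prp : Type} {A B : Set Agt}
    {a b : Agt} (ha : a ∈ A) (hb : b ∉ A ∪ B) {p q : Prp} (hpq : p ≠ q) :
    (¬ ∃ χ : CLForm Agt Prp, ∀ (M : CGM Agt Prp) (s : M.State),
        M.satCL χ s ↔ M.sat (.ob A B (.atom p) (.atom q)) s) ∧
    (∃ (M : CGM Agt Prp) (R : M.State → M.State → Prop) (s1 s2 : M.State),
        M.CLBisim R ∧ R s1 s2 ∧
        M.sat (.ob A B (.atom p) (.atom q)) s1 ∧
        ¬ M.sat (.ob A B (.atom p) (.atom q)) s2) := by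
  let M := oneShot a b (hedgePayoff p q)
  let R : M.State → M.State → Prop := Sum.LiftRel (fun _ _ => True) Eq
  have hR : M.CLBisim R :=
    clBisim_oneShot (range_hedgePayoff_col_subset p q) (exists_range_hedgePayoff_row_subset p q)
  have hst : R (.inl false) (.inl true) := .inl trivial
  have hs : M.sat (.ob A B (.atom p) (.atom q)) (.inl false) :=
    (sat_ob_oneShot_inl ha hb p q false).2 fun _ => mem_hedgePayoff_false_of_forall_mem
  have ht : ¬ M.sat (.ob A B (.atom p) (.atom q)) (.inl true) := fun h =>
    hpq.symm ((sat_ob_oneShot_inl ha hb p q true).1 h .hedge (mem_hedgePayoff_true_hedge p q) false)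
  exact ⟨hR.not_definable (P := fun M => M.sat _) hst hs ht, M, R, _, _, hR, hst, hs, ht⟩

/-- **The observer-conditional operator `Oβ({a};∅)(p▷q)` is not definable in
Coalition Logic.** -/
theorem observer_conditional_not_definable_in_CL {Agt Prp : Type} [Finite Agt]
    (a b : Agt) (hab : a ≠ b) (p q : Prp) (hpq : p ≠ q) :
    (¬ ∃ χ : CLForm Agt Prp, ∀ (M : CGM Agt Prp) (s : M.State),
        M.satCL χ s ↔ M.sat (.ob {a} (∅ : Set Agt) (.atom p) (.atom q)) s) ∧
    (∃ (M : CGM Agt Prp) (R : M.State → M.State → Prop) (s1 s2 : M.State),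
        M.CLBisim R ∧ R s1 s2 ∧
        M.sat (.ob {a} (∅ : Set Agt) (.atom p) (.atom q)) s1 ∧
        ¬ M.sat (.ob {a} (∅ : Set Agt) (.atom p) (.atom q)) s2) :=
  observer_conditional_not_definable_in_CL_general (Set.mem_singleton a)
    (by simpa using hab.symm) hpq
end

section
/- (Anti-monotonicity fails for Oβ) Let Agt contain three distinct agents a, b, c and let p, q be distinct atomic propositions. Then the formula Oβ({a,c};{b})(p▷q) → Oβ({a};{b})(p▷q) is not valid: there exist a concurrent game model M over Agt and a state s0 of M such that M, s0 ⊨ Oβ({a,c};{b})(p▷q) and M, s0 ⊭ Oβ({a};{b})(p▷q). -/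
/-!
When the condition `φ` of `Oβ(A;B)(φ▷ψ)` holds everywhere, the formula says that `B` can answer
each joint action of `A` so as to force `ψ`. In matching pennies between `b` and `c`, where `ψ`
says that the two coins match, `b` can answer a coalition containing `c` by copying its coin; once
`c` has left that coalition without joining `b`'s, it can always turn its own coin over afterwards.
-/

namespace CGM

variable {Agt Prp : Type}

/-- Matching pennies between `b` and `c`: every agent shows a side of a coin, the game moves to the
state `true` if the coins of `b` and `c` match and to `false` otherwise, and `q` records a match.
All other atoms hold everywhere, so that they impose no condition on the play. -/
def matchingPennies (b c : Agt) (q : Prp) : CGM Agt Prp where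
  State := Bool
  state_ne := inferInstance
  Act _ := Bool
  act_ne _ := inferInstance
  avail _ _ := Set.univ
  avail_ne _ _ := Set.univ_nonempty
  out _ τ := τ b == τ c
  val r := {s | r = q → s = true}

namespace matchingPennies

variable {b c : Agt} {p q : Prp} {A B : Set Agt}

theorem jointAt (s : Bool) (σ : Agt → Bool) : (matchingPennies b c q).JointAt A s σ :=
  fun _ _ ↦ Set.mem_univ _

theorem sat_atom_self_iff {s : Bool} : (matchingPennies b c q).sat (.atom q) s ↔ s = true :=
  ⟨fun h ↦ h rfl, fun h _ ↦ h⟩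

theorem sat_atom_of_ne (hpq : p ≠ q) (s : Bool) : (matchingPennies b c q).sat (.atom p) s :=
  fun h ↦ absurd h hpq

theorem eq_true_of_mem_outsAB_copy (hc : c ∈ A) (hb : b ∈ B \ A) {s u : Bool} {σ : Agt → Bool}
    (hu : u ∈ (matchingPennies b c q).OutsAB s A B σ fun _ ↦ σ c) : u = true := by
  obtain ⟨τ, -, hτA, hτB, rfl⟩ := hu
  exact beq_iff_eq.mpr ((hτB b hb).trans (hτA c hc).symm)

theorem false_mem_outsAB (hbc : b ≠ c) (hc : c ∉ A ∪ B) (s : Bool) (σA σB : Agt → Bool) :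
    false ∈ (matchingPennies b c q).OutsAB s A B σA σB := by
  classical
  let ρ : Agt → Bool := A.piecewise σA σB
  let τ : Agt → Bool := Function.update ρ c (!ρ b)
  have τ_eq {x : Agt} (hx : x ∈ A ∪ B) : τ x = ρ x :=
    Function.update_of_ne (ne_of_mem_of_not_mem hx hc) _ _
  have mismatch : (τ b == τ c) = false := by simp [τ, hbc]
  refine ⟨τ, fun _ ↦ Set.mem_univ _, fun x hx ↦ ?_, fun x hx ↦ ?_, mismatch⟩
  · exact (τ_eq (.inl hx)).trans (A.piecewise_eq_of_mem _ _ hx)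
  · exact (τ_eq (.inr hx.1)).trans (A.piecewise_eq_of_notMem _ _ hx.2)

theorem sat_ob (hc : c ∈ A) (hb : b ∈ B \ A) (φ : ConStR Agt Prp) (s : Bool) :
    (matchingPennies b c q).sat (.ob A B φ (.atom q)) s :=
  fun σ _ _ ↦ ⟨fun _ ↦ σ c, jointAt s _,
    fun _ hu ↦ sat_atom_self_iff.mpr (eq_true_of_mem_outsAB_copy hc hb hu)⟩

theorem not_sat_ob (hbc : b ≠ c) (hc : c ∉ A ∪ B) {φ : ConStR Agt Prp}
    (hφ : ∀ u, (matchingPennies b c q).sat φ u) (s : Bool) :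
    ¬ (matchingPennies b c q).sat (.ob A B φ (.atom q)) s := by
  intro h
  obtain ⟨σB, -, hσB⟩ := h (fun _ ↦ true) (jointAt s _) fun u _ ↦ hφ u
  exact Bool.false_ne_true
    (sat_atom_self_iff.mp (hσB false (false_mem_outsAB hbc hc s _ σB)))

end matchingPennies

end CGM

theorem obeta_antimonotonicity_not_valid_general {Agt Prp : Type} {A A' B : Set Agt}
    (hB : (B \ A').Nonempty) (hA' : (A' \ (A ∪ B)).Nonempty) {p q : Prp} (hpq : p ≠ q) :
    ∃ (M : CGM Agt Prp) (s0 : M.State),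
      M.sat (.ob A' B (.atom p) (.atom q)) s0 ∧ ¬ M.sat (.ob A B (.atom p) (.atom q)) s0 := by
  obtain ⟨b, hb⟩ := hB
  obtain ⟨c, hcA', hc⟩ := hA'
  have hbc : b ≠ c := (ne_of_mem_of_not_mem hcA' hb.2).symm
  exact ⟨.matchingPennies b c q, true, CGM.matchingPennies.sat_ob hcA' hb _ _,
    CGM.matchingPennies.not_sat_ob hbc hc (CGM.matchingPennies.sat_atom_of_ne hpq) _⟩

/-- **Anti-monotonicity fails for Oβ:** the formula
`Oβ({a,c};{b})(p▷q) → Oβ({a};{b})(p▷q)` is not valid. -/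
theorem obeta_antimonotonicity_not_valid {Agt Prp : Type} [Finite Agt]
    (a b c : Agt) (hab : a ≠ b) (hac : a ≠ c) (hbc : b ≠ c)
    (p q : Prp) (hpq : p ≠ q) :
    ∃ (M : CGM Agt Prp) (s0 : M.State),
      M.sat (.ob {a, c} {b} (.atom p) (.atom q)) s0 ∧
      ¬ M.sat (.ob {a} {b} (.atom p) (.atom q)) s0 :=
  obeta_antimonotonicity_not_valid_general
    ⟨b, by simp [hab.symm, hbc]⟩ ⟨c, by simp [hac.symm, hbc.symm]⟩ hpq
end

section
/- (Soundness of axiom Oc 6) For all coalitions A, B ⊆ Agt and all ConStR-formulas φ, ψ, the formula Oc(A;B)(φ▷ψ) ↔ Oc(A;B\A)(φ▷ψ) is valid: at every state s of every concurrent game model M, M, s ⊨ Oc(A;B)(φ▷ψ) if and only if M, s ⊨ Oc(A;B\A)(φ▷ψ). -/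
namespace CGM

variable {Agt Prp : Type} {M : CGM Agt Prp} {s : M.State} {A B C : Set Agt}
  {σ σA σB : ∀ a, M.Act a}

theorem JointAt.mono (hBC : B ⊆ C) (hσ : M.JointAt C s σ) : M.JointAt B s σ :=
  fun a ha => hσ a (hBC ha)

theorem JointAt.piecewise [∀ a, Decidable (a ∈ A)]
    (hA : M.JointAt A s σA) (hB : M.JointAt (B \ A) s σB) :
    M.JointAt (A ∪ B) s (A.piecewise σA σB) := by
  intro a ha
  by_cases haA : a ∈ A
  · simpa only [Set.piecewise_eq_of_mem _ _ _ haA] using hA a haA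
  · simpa only [Set.piecewise_eq_of_notMem _ _ _ haA] using hB a ⟨ha.resolve_left haA, haA⟩

theorem outsAB_sdiff :
    M.OutsAB s A (B \ A) σA σB = M.OutsAB s A B σA σB := by
  simp only [OutsAB, sdiff_idem]

theorem outsAB_piecewise [∀ a, Decidable (a ∈ A)] :
    M.OutsAB s A B σA (A.piecewise σ σB) = M.OutsAB s A B σA σB := by
  have agree_iff (τ : ∀ a, M.Act a) :
      (∀ a ∈ B \ A, τ a = A.piecewise σ σB a) ↔ ∀ a ∈ B \ A, τ a = σB a :=
    forall₂_congr fun a ha => by rw [Set.piecewise_eq_of_notMem _ _ _ ha.2]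
  simp only [OutsAB, agree_iff]

theorem exists_jointAt_outsAB_subset_sdiff_iff (hA : M.JointAt A s σA) (U : Set M.State) :
    (∃ σB, M.JointAt B s σB ∧ M.OutsAB s A B σA σB ⊆ U) ↔
      ∃ σB, M.JointAt (B \ A) s σB ∧ M.OutsAB s A (B \ A) σA σB ⊆ U := by
  classical
  simp only [outsAB_sdiff]
  constructor
  · rintro ⟨σB, hB, hU⟩
    exact ⟨σB, hB.mono Set.sdiff_subset, hU⟩
  · rintro ⟨σB, hB, hU⟩
    -- Agents in `A ∩ B` copy `σA`; their part of the response does not affect the outcomes.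
    exact ⟨A.piecewise σA σB, (hA.piecewise hB).mono Set.subset_union_right,
      outsAB_piecewise.trans_subset hU⟩

end CGM

theorem oc6_sound_general {Agt Prp : Type} (A B : Set Agt) (φ ψ : ConStR Agt Prp)
    (M : CGM Agt Prp) (s : M.State) :
    M.sat (.oc A B φ ψ) s ↔ M.sat (.oc A (B \ A) φ ψ) s := by
  simp only [CGM.sat]
  exact exists_congr fun _ => and_congr_right fun hA => and_congr_right fun _ =>
    CGM.exists_jointAt_outsAB_subset_sdiff_iff hA {u | M.sat ψ u}

/-- **Soundness of axiom Oc 6:** `Oc(A;B)(φ▷ψ) ↔ Oc(A;B\A)(φ▷ψ)` is valid. -/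
theorem oc6_sound {Agt Prp : Type} [Finite Agt]
    (A B : Set Agt) (φ ψ : ConStR Agt Prp)
    (M : CGM Agt Prp) (s : M.State) :
    M.sat (.oc A B φ ψ) s ↔ M.sat (.oc A (B \ A) φ ψ) s :=
  oc6_sound_general A B φ ψ M s
end
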